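/- arXiv:2006.05449 — 8 statements merged into one kernel-verified Lean document; each statement's English description precedes it below -/
import Mathlib

section
/- Let i be an original instruction with duplicate D(i), and let s_0, s_1, s', s'' be states with F(s_0, i, s') and F(s_1, D(i), s''). If s_0(l) = s_1(c(l)) for every original location l ∈ L_O, then s'(l) = s''(c(l)) for every original location l ∈ L_O. -/
/-- An instruction: an opcode, an output location and two input locations. -/
structure Instr (L Op : Type*) where
  op : Op
  out : L
  in1 : L
  in2 : L

/-- A state: an architectural part `L → V` and a non-architectural part `NS`. -/
abbrev PState (V L NS : Type*) := (L → V) × NS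

/-- The abstract specification relation `F` induced by the family `f` of opcode
specification functions: all non-output locations are preserved and the output
location gets the value specified by the opcode's specification function. -/
def AbsSpec {V L NS Op : Type*} (f : Op → V → V → V)
    (s : PState V L NS) (i : Instr L Op) (s' : PState V L NS) : Prop :=
  (∀ l, l ≠ i.out → s.1 l = s'.1 l) ∧
    s'.1 i.out = f i.op (s.1 i.in1) (s.1 i.in2)

/-- An original instruction: all its locations lie in the set `O` of original locations. -/
def IsOrig {L Op : Type*} (O : Set L) (i : Instr L Op) : Prop :=
  i.out ∈ O ∧ i.in1 ∈ O ∧ i.in2 ∈ O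

/-- A duplicate instruction: all its locations lie in the set `DL` of duplicate locations. -/
def IsDup {L Op : Type*} (DL : Set L) (i : Instr L Op) : Prop :=
  i.out ∈ DL ∧ i.in1 ∈ DL ∧ i.in2 ∈ DL

/-- The instruction duplication function `D` w.r.t. the location correspondence `c`. -/
def dupI {L Op : Type*} (c : L → L) (i : Instr L Op) : Instr L Op :=
  ⟨i.op, c i.out, c i.in1, c i.in2⟩

/-- QED-consistency of a state: every original location holds the same value as
its corresponding duplicate location. -/
def QedCons {V L NS : Type*} (O : Set L) (c : L → L) (s : PState V L NS) : Prop :=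
  ∀ l ∈ O, s.1 l = s.1 (c l)

/-- If an original instruction and its duplicate each execute according to the
specification from states agreeing on all corresponding original/duplicate location
pairs, then the resulting states also agree on all such pairs. -/
theorem stmt3 {V L NS Op : Type*} (f : Op → V → V → V)
    (O DL : Set L) (c : L → L)
    (hpart : ∀ l : L, l ∈ O ↔ l ∉ DL) (hbij : Set.BijOn c O DL)
    (i : Instr L Op) (hOrig : IsOrig O i)
    (s0 s1 s' s'' : PState V L NS)
    (h1 : AbsSpec f s0 i s') (h2 : AbsSpec f s1 (dupI c i) s'')
    (hagree : ∀ l ∈ O, s0.1 l = s1.1 (c l)) :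
    ∀ l ∈ O, s'.1 l = s''.1 (c l) := by
  obtain ⟨hout, hin1, hin2⟩ := hOrig
  intro l hl
  by_cases h : l = i.out
  · subst h
    rw [h1.2, hagree _ hin1, hagree _ hin2]
    exact h2.2.symm
  · -- Injectivity of `c` on `O` keeps `c l` away from the output location of the duplicate.
    have hc : c l ≠ (dupI c i).out := fun e => h (hbij.injOn hl hout e)
    rw [← h1.1 l h, ← h2.1 _ hc, hagree l hl]
end

section
/- Let i_1, …, i_n be original instructions, let t = ⟨i_1, …, i_n, D(i_1), …, D(i_n)⟩, and let s_0, …, s_{2n} be states with F(s_{j−1}, t_j, s_j) for every 1 ≤ j ≤ 2n. If s_0 is QED-consistent, then for every 0 ≤ j ≤ n and every original location l ∈ L_O, s_j(l) = s_{n+j}(c(l)). -/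
/-- Along a QED test `⟨i_1, …, i_n, D(i_1), …, D(i_n)⟩` executed according to the
specification from a QED-consistent state, the value at every original location `l`
after `j` original instructions equals the value at `c l` after `j` duplicate
instructions, for every `0 ≤ j ≤ n`. -/
theorem stmt5 {V L NS Op : Type*} (f : Op → V → V → V)
    (O DL : Set L) (c : L → L)
    (hpart : ∀ l : L, l ∈ O ↔ l ∉ DL) (hbij : Set.BijOn c O DL)
    (n : ℕ) (ins : ℕ → Instr L Op) (st : ℕ → PState V L NS)
    (horig : ∀ j < n, IsOrig O (ins j))
    (hspec1 : ∀ j < n, AbsSpec f (st j) (ins j) (st (j + 1)))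
    (hspec2 : ∀ j < n, AbsSpec f (st (n + j)) (dupI c (ins j)) (st (n + j + 1)))
    (hqed0 : QedCons O c (st 0)) :
    ∀ j ≤ n, ∀ l ∈ O, (st j).1 l = (st (n + j)).1 (c l) := by
  -- The first half writes only to original locations, so every `c l` keeps its initial value.
  have hkeep : ∀ j ≤ n, ∀ l ∈ O, (st j).1 (c l) = (st 0).1 (c l) := by
    intro j
    induction j with
    | zero => intro _ l _; rfl
    | succ j ih =>
      intro hj l hl
      have hne : c l ≠ (ins j).out := fun h =>
        (hpart _).1 (horig j hj).1 (h ▸ hbij.mapsTo hl)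
      rw [← (hspec1 j hj).1 _ hne]
      exact ih (Nat.le_of_succ_le hj) l hl
  -- The two halves then run in lockstep under the correspondence `c`.
  intro j
  induction j with
  | zero =>
    intro _ l hl
    exact (hqed0 l hl).trans (hkeep n le_rfl l hl).symm
  | succ j ih =>
    intro hj l hl
    have ih := ih (Nat.le_of_succ_le hj)
    obtain ⟨ho, h1, h2⟩ := horig j hj
    obtain ⟨hframe, hout⟩ := hspec1 j hj
    obtain ⟨hframe', hout'⟩ := hspec2 j hj
    simp only [dupI] at hframe' hout'
    rw [← Nat.add_assoc]
    by_cases hlo : l = (ins j).out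
    · rw [hlo, hout, hout', ih _ h1, ih _ h2]
    · -- Injectivity of `c` on `O` keeps the duplicate write away from `c l`.
      rw [← hframe l hlo, ← hframe' (c l) (fun h => hlo (hbij.injOn hl ho h))]
      exact ih l hl
end

section
/- QED-consistency is preserved by QED tests executed according to the specification: let t = ⟨i_1, …, i_n, D(i_1), …, D(i_n)⟩ be a QED test (with i_1, …, i_n original instructions) and let s_0, …, s_{2n} be states with F(s_{j−1}, t_j, s_j) for every 1 ≤ j ≤ 2n. If s_0 is QED-consistent, then s_{2n} is QED-consistent. -/
/-- QED-consistency is preserved by QED tests executed according to the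
specification: executing `⟨i_1, …, i_n, D(i_1), …, D(i_n)⟩` according to the
specification from a QED-consistent state yields a QED-consistent final state. -/
theorem stmt6 {V L NS Op : Type*} (f : Op → V → V → V)
    (O DL : Set L) (c : L → L)
    (hpart : ∀ l : L, l ∈ O ↔ l ∉ DL) (hbij : Set.BijOn c O DL)
    (n : ℕ) (ins : ℕ → Instr L Op) (st : ℕ → PState V L NS)
    (horig : ∀ j < n, IsOrig O (ins j))
    (hspec1 : ∀ j < n, AbsSpec f (st j) (ins j) (st (j + 1)))
    (hspec2 : ∀ j < n, AbsSpec f (st (n + j)) (dupI c (ins j)) (st (n + j + 1)))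
    (hqed0 : QedCons O c (st 0)) :
    QedCons O c (st (2 * n)) := by
  have hout : ∀ j < n, c (ins j).out ∈ DL := fun j hj => hbij.mapsTo (horig j hj).1
  have hdup : ∀ k ≤ n, ∀ l ∈ O, (st k).1 (c l) = (st 0).1 (c l) := by
    intro k
    induction k with
    | zero => intros; rfl
    | succ k ih =>
      intro hk l hl
      have hne : c l ≠ (ins k).out := fun h =>
        (hpart _).1 (horig k hk).1 (h ▸ hbij.mapsTo hl)
      rw [← (hspec1 k hk).1 _ hne, ih (Nat.le_of_succ_le hk) l hl]
  have horg : ∀ k ≤ n, ∀ l ∈ O, (st (n + k)).1 l = (st n).1 l := by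
    intro k
    induction k with
    | zero => intros; rfl
    | succ k ih =>
      intro hk l hl
      have hne : l ≠ c (ins k).out := fun h => (hpart l).1 hl (h ▸ hout k hk)
      rw [← Nat.add_assoc, ← (hspec2 k hk).1 _ hne, ih (Nat.le_of_succ_le hk) l hl]
  have hreplay : ∀ k ≤ n, ∀ l ∈ O, (st (n + k)).1 (c l) = (st k).1 l := by
    intro k
    induction k with
    | zero =>
      intro _ l hl
      exact (hdup n le_rfl l hl).trans (hqed0 l hl).symm
    | succ k ih =>
      intro hk l hl
      have ih := ih (Nat.le_of_succ_le hk)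
      obtain ⟨ho, h1, h2⟩ := horig k hk
      rw [← Nat.add_assoc]
      by_cases h : l = (ins k).out
      · subst h
        have e := (hspec2 k hk).2
        simp only [dupI] at e
        rw [e, (hspec1 k hk).2, ih _ h1, ih _ h2]
      · -- injectivity of `c` on `O`: a location other than the output has a copy
        -- other than the duplicate's output
        have hne : c l ≠ c (ins k).out := fun e => h (hbij.injOn hl ho e)
        rw [← (hspec2 k hk).1 _ hne, ← (hspec1 k hk).1 _ h, ih l hl]
  intro l hl
  rw [two_mul, horg n le_rfl l hl, hreplay n le_rfl l hl]
end

section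
/- Soundness of SQED: if the processor is QED-inconsistent (some QED test fails), then for every family of opcode specification functions f_op the processor is not correct with respect to the induced abstract specification relation F. -/
/-- `δ*`: run an instruction sequence from a state via the transition function `δ`. -/
def runP {V L NS Op : Type*} (δ : PState V L NS → Instr L Op → PState V L NS)
    (s : PState V L NS) (t : List (Instr L Op)) : PState V L NS :=
  t.foldl δ s

/-- A state is reachable if it is obtained by running some instruction sequence
from some initial state (a state whose non-architectural part is `σ0`). -/
def Reach {V L NS Op : Type*} (δ : PState V L NS → Instr L Op → PState V L NS)
    (σ0 : NS) (s : PState V L NS) : Prop :=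
  ∃ (s0 : PState V L NS) (t : List (Instr L Op)), s0.2 = σ0 ∧ runP δ s0 t = s

/-- Correctness: every instruction executes according to the abstract
specification in every reachable state. -/
def CorrectP {V L NS Op : Type*} (f : Op → V → V → V)
    (δ : PState V L NS → Instr L Op → PState V L NS) (σ0 : NS) : Prop :=
  ∀ (i : Instr L Op) (s : PState V L NS), Reach δ σ0 s → AbsSpec f s i (δ s i)

theorem Reach.step {V L NS Op : Type*} {δ : PState V L NS → Instr L Op → PState V L NS}
    {σ0 : NS} {s : PState V L NS} (h : Reach δ σ0 s) (i : Instr L Op) :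
    Reach δ σ0 (δ s i) := by
  obtain ⟨s0, t, h0, rfl⟩ := h
  exact ⟨s0, t ++ [i], h0, by simp [runP]⟩

theorem CorrectP.runP_eq_of_out_ne {V L NS Op : Type*} {f : Op → V → V → V}
    {δ : PState V L NS → Instr L Op → PState V L NS} {σ0 : NS} (hc : CorrectP f δ σ0)
    (l : L) (t : List (Instr L Op)) (ht : ∀ i ∈ t, l ≠ i.out)
    (s : PState V L NS) (hs : Reach δ σ0 s) : (runP δ s t).1 l = s.1 l := by
  induction t generalizing s with
  | nil => rfl
  | cons i t ih =>
    have h := ih (fun j hj => ht j (List.mem_cons_of_mem _ hj)) (δ s i) (hs.step i)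
    exact h.trans ((hc i s hs).1 l (ht i List.mem_cons_self)).symm

/-- If the original part of `u` matches the duplicate part of `w`, the match persists when `u`
executes original instructions and `w` their duplicates. -/
theorem CorrectP.runP_map_dupI {V L NS Op : Type*} {f : Op → V → V → V}
    {δ : PState V L NS → Instr L Op → PState V L NS} {σ0 : NS} (hc : CorrectP f δ σ0)
    {O : Set L} {c : L → L} (hinj : Set.InjOn c O)
    (a : List (Instr L Op)) (ha : ∀ i ∈ a, IsOrig O i)
    (u w : PState V L NS) (hu : Reach δ σ0 u) (hw : Reach δ σ0 w)
    (huw : ∀ l ∈ O, u.1 l = w.1 (c l)) :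
    ∀ l ∈ O, (runP δ u a).1 l = (runP δ w (a.map (dupI c))).1 (c l) := by
  induction a generalizing u w with
  | nil => exact huw
  | cons i a ih =>
    refine ih (fun j hj => ha j (List.mem_cons_of_mem _ hj)) (δ u i) (δ w (dupI c i))
      (hu.step _) (hw.step _) fun l hl => ?_
    obtain ⟨ho, h1, h2⟩ := ha i List.mem_cons_self
    obtain ⟨fu, eu⟩ := hc i u hu
    obtain ⟨fw, ew⟩ := hc (dupI c i) w hw
    by_cases h : l = i.out
    · subst h
      rw [eu, huw _ h1, huw _ h2]
      exact ew.symm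
    · rw [← fu l h, huw l hl]
      exact fw (c l) fun e => h (hinj hl ho e)

/-- Soundness of SQED: if some QED test fails (the processor is QED-inconsistent),
then for every family of opcode specification functions `f` the processor is not
correct with respect to the induced abstract specification relation. -/
theorem stmt7 {V L NS Op : Type*}
    (δ : PState V L NS → Instr L Op → PState V L NS) (σ0 : NS)
    (O DL : Set L) (c : L → L)
    (hpart : ∀ l : L, l ∈ O ↔ l ∉ DL) (hbij : Set.BijOn c O DL)
    (hincons : ∃ (a : List (Instr L Op)) (s0 : PState V L NS),
      (∀ i ∈ a, IsOrig O i) ∧ s0.2 = σ0 ∧ QedCons O c s0 ∧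
        ¬ QedCons O c (runP δ s0 (a ++ a.map (dupI c)))) :
    ∀ f : Op → V → V → V, ¬ CorrectP f δ σ0 := by
  intro f hc
  obtain ⟨a, s0, ha, h0, hcons, hn⟩ := hincons
  have hr0 : Reach δ σ0 s0 := ⟨s0, [], h0, rfl⟩
  have hr1 : Reach δ σ0 (runP δ s0 a) := ⟨s0, a, h0, rfl⟩
  have hne : ∀ l ∈ O, ∀ l' ∈ O, l ≠ c l' := fun l hl l' hl' e =>
    (hpart l).1 hl (e ▸ hbij.mapsTo hl')
  refine hn fun l hl => ?_
  rw [show runP δ s0 (a ++ a.map (dupI c)) = runP δ (runP δ s0 a) (a.map (dupI c)) from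
    List.foldl_append]
  rw [hc.runP_eq_of_out_ne l (a.map (dupI c)) ?_ _ hr1]
  · refine hc.runP_map_dupI hbij.injOn a ha s0 _ hr0 hr1 (fun k hk => ?_) l hl
    rw [hc.runP_eq_of_out_ne (c k) a (fun i hi => (hne _ (ha i hi).1 k hk).symm) s0 hr0]
    exact hcons k hk
  · intro i hi
    obtain ⟨j, hj, rfl⟩ := List.mem_map.1 hi
    exact hne l hl _ (ha j hj).1
end

section
/- QED-consistency is preserved by extended QED tests executed according to the specification: let t be an instruction sequence obtained from a QED test ⟨i_1, …, i_n, D(i_1), …, D(i_n)⟩ (with i_1, …, i_n original instructions) by inserting zero or more no-operation instructions anywhere in the sequence, and let s_0, …, s_m be states such that for each step j, either t_j is one of the inserted no-operation instructions and s_j = δ(s_{j−1}, t_j), or t_j is one of the QED-test instructions and F(s_{j−1}, t_j, s_j). If s_0 is QED-consistent, then s_m is QED-consistent. -/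
/-- A no-operation instruction: executing it never changes the architectural part
of the state. -/
def IsNop {V L NS Op : Type*} (δ : PState V L NS → Instr L Op → PState V L NS)
    (i : Instr L Op) : Prop :=
  ∀ s : PState V L NS, (δ s i).1 = s.1

/-- `ExtRun f δ t s s'` holds iff starting from `s` one can execute the
instructions of `t` in order, with zero or more no-operation instructions inserted
anywhere (each inserted no-operation executed via `δ`, and each instruction of `t`
executed according to the specification `AbsSpec f`), reaching `s'`. -/
inductive ExtRun {V L NS Op : Type*} (f : Op → V → V → V)
    (δ : PState V L NS → Instr L Op → PState V L NS) :
    List (Instr L Op) → PState V L NS → PState V L NS → Prop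
  | nil (s : PState V L NS) : ExtRun f δ [] s s
  | step {i : Instr L Op} {t : List (Instr L Op)} {s s' s'' : PState V L NS} :
      AbsSpec f s i s' → ExtRun f δ t s' s'' → ExtRun f δ (i :: t) s s''
  | nop {i : Instr L Op} {t : List (Instr L Op)} {s s'' : PState V L NS} :
      IsNop δ i → ExtRun f δ t (δ s i) s'' → ExtRun f δ t s s''

open Classical in
/-- The architectural effect prescribed by the specification functions `f` for an instruction. -/
noncomputable def archStep {V L Op : Type*} (f : Op → V → V → V) (x : L → V) (i : Instr L Op) :
    L → V :=
  Function.update x i.out (f i.op (x i.in1) (x i.in2))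

/-- The architectural state reached from `x` by executing `t` according to the specification. -/
noncomputable def archRun {V L Op : Type*} (f : Op → V → V → V) (t : List (Instr L Op))
    (x : L → V) : L → V :=
  t.foldl (archStep f) x

theorem ExtRun.eq_archRun {V L NS Op : Type*} {f : Op → V → V → V}
    {δ : PState V L NS → Instr L Op → PState V L NS} {t : List (Instr L Op)}
    {s s' : PState V L NS} (h : ExtRun f δ t s s') : s'.1 = archRun f t s.1 := by
  induction h with
  | nil s => rfl
  | @step i t s s₁ s₂ hF _ ih =>
    have hs : s₁.1 = archStep f s.1 i := by
      funext l
      by_cases hl : l = i.out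
      · subst hl
        simp [archStep, hF.2]
      · simp [archStep, hl, hF.1 l hl]
    rw [ih, hs]
    rfl
  | nop hnop _ ih => rw [ih, hnop]

/-- A location that no instruction of `t` writes keeps its value. -/
theorem archRun_frame {V L Op : Type*} (f : Op → V → V → V) (t : List (Instr L Op)) (x : L → V)
    (l : L) (h : ∀ i ∈ t, l ≠ i.out) : archRun f t x l = x l := by
  induction t generalizing x with
  | nil => rfl
  | cons i t ih =>
    have h1 : archRun f t (archStep f x i) l = archStep f x i l :=
      ih _ fun j hj => h j (List.mem_cons_of_mem _ hj)
    have h2 : archStep f x i l = x l := by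
      simp [archStep, h i List.mem_cons_self]
    exact h1.trans h2

/-- Simulation: if `y` holds at duplicate locations what `x` holds at original ones, this
remains so after running `a` from `x` and the duplicate of `a` from `y`. -/
theorem archRun_dup {V L Op : Type*} (f : Op → V → V → V) {O : Set L} {c : L → L}
    (hc : Set.InjOn c O) (a : List (Instr L Op)) (ha : ∀ i ∈ a, IsOrig O i) (x y : L → V)
    (hxy : ∀ l ∈ O, x l = y (c l)) :
    ∀ l ∈ O, archRun f a x l = archRun f (a.map (dupI c)) y (c l) := by
  induction a generalizing x y with
  | nil => exact hxy
  | cons i a ih =>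
    obtain ⟨ho, h1, h2⟩ := ha i List.mem_cons_self
    refine ih (fun j hj => ha j (List.mem_cons_of_mem _ hj)) (archStep f x i)
      (archStep f y (dupI c i)) fun l hl => ?_
    by_cases hlo : l = i.out
    · subst hlo
      simp [archStep, dupI, hxy _ h1, hxy _ h2]
    · have hclo : c l ≠ c i.out := fun e => hlo (hc hl ho e)
      simp [archStep, dupI, hlo, hclo, hxy l hl]

/-- QED-consistency is preserved by extended QED tests: executing a QED test
`a ++ D(a)` with zero or more no-operation instructions inserted anywhere, where
each inserted no-op takes a `δ`-step and each QED-test instruction executes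
according to the specification, yields a QED-consistent final state when started
in a QED-consistent state. -/
theorem stmt11 {V L NS Op : Type*} (f : Op → V → V → V)
    (δ : PState V L NS → Instr L Op → PState V L NS)
    (O DL : Set L) (c : L → L)
    (hpart : ∀ l : L, l ∈ O ↔ l ∉ DL) (hbij : Set.BijOn c O DL)
    (a : List (Instr L Op)) (horig : ∀ i ∈ a, IsOrig O i)
    (s s' : PState V L NS)
    (hrun : ExtRun f δ (a ++ a.map (dupI c)) s s')
    (hqed : QedCons O c s) :
    QedCons O c s' := by
  intro l hl
  rw [hrun.eq_archRun, archRun, List.foldl_append]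
  change archRun f (a.map (dupI c)) (archRun f a s.1) l =
    archRun f (a.map (dupI c)) (archRun f a s.1) (c l)
  rw [archRun_frame f (a.map (dupI c)) _ l]
  · refine archRun_dup f hbij.injOn a horig _ _ (fun l hl => ?_) l hl
    rw [archRun_frame f a _ (c l)]
    · exact hqed l hl
    · intro i hi e
      exact (hpart _).1 (horig i hi).1 (e ▸ hbij.mapsTo hl)
  · intro i hi e
    obtain ⟨j, hj, rfl⟩ := List.mem_map.1 hi
    exact (hpart l).1 hl (e ▸ hbij.mapsTo (horig j hj).1)
end

section
/- QED-consistency is preserved by interleaved QED tests executed according to the specification: let i_1, …, i_n be original instructions and let t = ⟨t_1, …, t_{2n}⟩ be any interleaving of the sequences ⟨i_1, …, i_n⟩ and ⟨D(i_1), …, D(i_n)⟩ (i.e., a merge preserving the relative order within each of the two sequences). Let s_0, …, s_{2n} be states with F(s_{j−1}, t_j, s_j) for every 1 ≤ j ≤ 2n. If s_0 is QED-consistent, then s_{2n} is QED-consistent. -/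
/-- `Interleave l1 l2 t`: `t` is a merge of `l1` and `l2` preserving the relative
order within each of the two sequences. -/
inductive Interleave {α : Type*} : List α → List α → List α → Prop
  | nil : Interleave [] [] []
  | left {a : α} {l1 l2 t : List α} :
      Interleave l1 l2 t → Interleave (a :: l1) l2 (a :: t)
  | right {a : α} {l1 l2 t : List α} :
      Interleave l1 l2 t → Interleave l1 (a :: l2) (a :: t)

/-- `SpecRun f t s s'`: every instruction of `t`, executed in order starting from
`s` and ending at `s'`, executes according to the specification `AbsSpec f`. -/
def SpecRun {V L NS Op : Type*} (f : Op → V → V → V) :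
    List (Instr L Op) → PState V L NS → PState V L NS → Prop
  | [], s, s'' => s'' = s
  | i :: t, s, s'' => ∃ s', AbsSpec f s i s' ∧ SpecRun f t s' s''

open Classical in
/-- Deterministic execution of an instruction sequence on an architectural state alone, following
the opcode specification functions `f`. -/
noncomputable def archExec {V L Op : Type*} (f : Op → V → V → V) :
    List (Instr L Op) → (L → V) → (L → V)
  | [], u => u
  | i :: l, u => archExec f l (Function.update u i.out (f i.op (u i.in1) (u i.in2)))

/-- Simulation lemma: the two halves of the state evolve independently. The state `u` tracks the
original half of `s`, and `v` tracks the duplicate half of `s`, transported to the original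
locations along `c`. The two instruction lists are unrelated, so that the induction can consume
them at different speeds. -/
theorem specRun_interleave {V L NS Op : Type*} (f : Op → V → V → V)
    (O DL : Set L) (c : L → L)
    (hpart : ∀ l : L, l ∈ O ↔ l ∉ DL) (hbij : Set.BijOn c O DL)
    {l1 m t : List (Instr L Op)} (hint : Interleave l1 m t) :
    ∀ (l2 : List (Instr L Op)), m = l2.map (dupI c) →
      (∀ i ∈ l1, IsOrig O i) → (∀ i ∈ l2, IsOrig O i) →
      ∀ (s s' : PState V L NS) (u v : L → V), SpecRun f t s s' →
        (∀ l ∈ O, u l = s.1 l) → (∀ l ∈ O, v l = s.1 (c l)) →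
        (∀ l ∈ O, archExec f l1 u l = s'.1 l) ∧
          (∀ l ∈ O, archExec f l2 v l = s'.1 (c l)) := by
  classical
  have hne : ∀ l ∈ O, ∀ k ∈ O, c l ≠ k := fun l hl k hk h =>
    (hpart k).1 hk (h ▸ hbij.mapsTo hl)
  induction hint with
  | nil =>
    intro l2 hm _ _ s s' u v hrun hu hv
    obtain rfl : l2 = [] := List.map_eq_nil_iff.1 hm.symm
    obtain rfl : s' = s := hrun
    exact ⟨hu, hv⟩
  | @left i l1 m t _ ih =>
    rintro l2 hm h1 h2 s s' u v ⟨r, ⟨hkeep, hout⟩, hrun⟩ hu hv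
    obtain ⟨ho, hi1, hi2⟩ := h1 i (by simp)
    refine ih l2 hm (fun j hj => h1 j (by simp [hj])) h2 r s' _ v hrun ?_ ?_
    · intro l hl
      by_cases h : l = i.out
      · subst h
        rw [Function.update_self, hout, hu _ hi1, hu _ hi2]
      · rw [Function.update_of_ne h, hu l hl, hkeep l h]
    · intro l hl
      rw [hv l hl, hkeep _ (hne l hl _ ho)]
  | @right i l1 m t _ ih =>
    rintro l2 hm h1 h2 s s' u v ⟨r, ⟨hkeep, hout⟩, hrun⟩ hu hv
    obtain ⟨j, l2, rfl, rfl, rfl⟩ := List.map_eq_cons_iff.1 hm.symm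
    obtain ⟨ho, hi1, hi2⟩ := h2 j (by simp)
    refine ih l2 rfl h1 (fun k hk => h2 k (by simp [hk])) r s' u _ hrun ?_ ?_
    · intro l hl
      rw [hu l hl, hkeep l (hne _ ho l hl).symm]
    · intro l hl
      by_cases h : l = j.out
      · subst h
        rw [Function.update_self, hv _ hi1, hv _ hi2]
        exact hout.symm
      · rw [Function.update_of_ne h, hv l hl]
        -- injectivity of `c` on `O`: the duplicate of another location is not overwritten
        exact hkeep _ fun heq => h (hbij.injOn hl ho heq)

/-- QED-consistency is preserved by interleaved QED tests executed according to
the specification: any interleaving of `⟨i_1, …, i_n⟩` with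
`⟨D(i_1), …, D(i_n)⟩`, executed according to the specification from a
QED-consistent state, yields a QED-consistent final state. -/
theorem stmt12 {V L NS Op : Type*} (f : Op → V → V → V)
    (O DL : Set L) (c : L → L)
    (hpart : ∀ l : L, l ∈ O ↔ l ∉ DL) (hbij : Set.BijOn c O DL)
    (a t : List (Instr L Op)) (horig : ∀ i ∈ a, IsOrig O i)
    (hint : Interleave a (a.map (dupI c)) t)
    (s0 s' : PState V L NS)
    (hrun : SpecRun f t s0 s')
    (hqed : QedCons O c s0) :
    QedCons O c s' := by
  -- a single architectural state, that of `s0`, tracks both halves initially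
  obtain ⟨h1, h2⟩ := specRun_interleave f O DL c hpart hbij hint a rfl horig horig
    s0 s' s0.1 s0.1 hrun (fun _ _ => rfl) hqed
  exact fun l hl => (h1 l hl).symm.trans (h2 l hl)
end

section
/- A bug-specific soft-reset QED test fails: suppose the processor is single-instruction correct with respect to F and i_r is a soft-reset instruction. Let i_1, …, i_k be original instructions (k ≥ 2), let t = ⟨i_1, …, i_k, i_r, D(i_1), i_r, D(i_2), …, i_r, D(i_k)⟩ (so t has length 3k with t_{k+2j−1} = i_r and t_{k+2j} = D(i_j) for 1 ≤ j ≤ k), let s_0 be a QED-consistent initial state, and let s_1, …, s_{3k} be the path from s_0 via t. Suppose F(s_{j−1}, i_j, s_j) for every 1 ≤ j ≤ k−1, that ¬F(s_{k−1}, i_k, s_k), and that s_{k−1}(l) = s_k(l) for every duplicate location l ∈ L_D (the buggy instruction does not corrupt any duplicate location). Then s_{3k} is not QED-consistent, i.e., the test fails. -/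
/-- If the duplicate locations of `t` mirror the original locations of `s`, they still do so after
`i` takes `s` to `s'` and its duplicate takes `t` to `t'`, both according to the specification. -/
lemma mirror_step {V L NS Op : Type*} {f : Op → V → V → V} {O : Set L} {c : L → L}
    (hinj : Set.InjOn c O) {i : Instr L Op} (hi : IsOrig O i) {s s' t t' : PState V L NS}
    (hs : AbsSpec f s i s') (ht : AbsSpec f t (dupI c i) t')
    (h : ∀ l ∈ O, t.1 (c l) = s.1 l) : ∀ l ∈ O, t'.1 (c l) = s'.1 l := by
  intro l hl
  by_cases hlo : l = i.out
  · subst hlo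
    have h2 : t'.1 (c i.out) = f i.op (t.1 (c i.in1)) (t.1 (c i.in2)) := ht.2
    rw [h2, hs.2, h _ hi.2.1, h _ hi.2.2]
  · rw [← hs.1 l hlo, ← h l hl]
    exact (ht.1 (c l) fun e => hlo (hinj hl hi.1 e)).symm

/-- A bug-specific soft-reset QED test fails: in a single-instruction correct
processor, executing `⟨i_1, …, i_k, i_r, D(i_1), i_r, D(i_2), …, i_r, D(i_k)⟩`
from a QED-consistent initial state, where steps `1, …, k−1` execute according to
the specification, step `k` violates it without corrupting any duplicate location,
yields a final state that is not QED-consistent. -/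
theorem stmt13 {V L NS Op : Type*} (f : Op → V → V → V)
    (δ : PState V L NS → Instr L Op → PState V L NS) (σ0 : NS)
    (O DL : Set L) (c : L → L)
    (hpart : ∀ l : L, l ∈ O ↔ l ∉ DL) (hbij : Set.BijOn c O DL)
    (ir : Instr L Op) (hreset : ∀ s : PState V L NS, δ s ir = (s.1, σ0))
    (hSI : ∀ (i : Instr L Op) (s : PState V L NS), s.2 = σ0 → AbsSpec f s i (δ s i))
    (k : ℕ) (hk : 2 ≤ k)
    (ins : ℕ → Instr L Op) (horig : ∀ j < k, IsOrig O (ins j))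
    (st : ℕ → PState V L NS)
    (hinit : (st 0).2 = σ0) (hqed0 : QedCons O c (st 0))
    (hpath1 : ∀ j < k, st (j + 1) = δ (st j) (ins j))
    (hpath2 : ∀ j < k, st (k + 2 * j + 1) = δ (st (k + 2 * j)) ir)
    (hpath3 : ∀ j < k, st (k + 2 * j + 2) = δ (st (k + 2 * j + 1)) (dupI c (ins j)))
    (hF : ∀ j < k - 1, AbsSpec f (st j) (ins j) (st (j + 1)))
    (hbug : ¬ AbsSpec f (st (k - 1)) (ins (k - 1)) (st k))
    (hnocorrupt : ∀ l ∈ DL, (st (k - 1)).1 l = (st k).1 l) :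
    ¬ QedCons O c (st (3 * k)) := by
  obtain ⟨m, rfl⟩ : ∃ m, k = m + 1 := ⟨k - 1, by omega⟩
  simp only [Nat.add_sub_cancel] at hF hbug hnocorrupt
  -- The reset changes only the non-architectural part, so each reset-and-duplicate pair
  -- acts as one step satisfying the specification.
  have hdup : ∀ j < m + 1, AbsSpec f (st (m + 1 + 2 * j)) (dupI c (ins j))
      (st (m + 1 + 2 * j + 2)) := by
    intro j hj
    have h := hSI (dupI c (ins j)) ((st (m + 1 + 2 * j)).1, σ0) rfl
    rw [hpath3 j hj, hpath2 j hj, hreset]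
    exact h
  have hDL : ∀ j ≤ m, ∀ l ∈ DL, (st j).1 l = (st 0).1 l := by
    intro j
    induction j with
    | zero => intro _ l _; rfl
    | succ j ih =>
      intro hj l hl
      rw [← ih (by omega) l hl]
      refine ((hF j (by omega)).1 l ?_).symm
      rintro rfl
      exact (hpart _).1 (horig j (by omega)).1 hl
  have hO : ∀ j ≤ m + 1, ∀ l ∈ O, (st (m + 1 + 2 * j)).1 l = (st (m + 1)).1 l := by
    intro j
    induction j with
    | zero => intro _ l _; rfl
    | succ j ih =>
      intro hj l hl
      rw [← ih (by omega) l hl]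
      refine ((hdup j (by omega)).1 l ?_).symm
      rintro rfl
      exact (hpart _).1 hl (hbij.mapsTo (horig j (by omega)).1)
  have hmirror : ∀ j ≤ m, ∀ l ∈ O, (st (m + 1 + 2 * j)).1 (c l) = (st j).1 l := by
    intro j
    induction j with
    | zero =>
      intro _ l hl
      have hcl := hbij.mapsTo hl
      exact (hnocorrupt _ hcl).symm.trans ((hDL m le_rfl _ hcl).trans (hqed0 l hl).symm)
    | succ j ih =>
      intro hj
      exact mirror_step hbij.injOn (horig j (by omega)) (hF j (by omega))
        (hdup j (by omega)) (ih (by omega))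
  intro hcons
  have hfin : ∀ l ∈ O, (st (m + 1)).1 l = (st (m + 1 + 2 * m + 2)).1 (c l) := by
    intro l hl
    rw [← hO (m + 1) le_rfl l hl]
    have e : 3 * (m + 1) = m + 1 + 2 * m + 2 := by ring
    rw [e] at hcons
    exact hcons l hl
  have hlast := hdup m (by omega)
  obtain ⟨ho, h1, h2⟩ := horig m (by omega)
  refine hbug ⟨fun l hl => ?_, ?_⟩
  · by_cases hlD : l ∈ DL
    · exact hnocorrupt l hlD
    · have hlO := (hpart l).2 hlD
      rw [hfin l hlO, ← hmirror m le_rfl l hlO]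
      exact hlast.1 (c l) fun e => hl (hbij.injOn hlO ho e)
  · rw [hfin _ ho, ← hmirror m le_rfl _ h1, ← hmirror m le_rfl _ h2]
    exact hlast.2
end

section
/- If the processor is not correct with respect to F and is single-instruction correct with respect to F, then there exist k ≥ 2, an initial state s_0, and an instruction sequence ⟨i_1, …, i_k⟩ whose path s_1, …, s_k from s_0 satisfies F(s_{j−1}, i_j, s_j) for all 1 ≤ j ≤ k−1 and ¬F(s_{k−1}, i_k, s_k); that is, every specification violation of a single-instruction-correct but incorrect processor is triggered by a sequence of at least two instructions from some initial state, and one can choose a triggering sequence all of whose proper prefix steps execute according to F. -/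
/-- In a single-instruction correct but incorrect processor, some specification
violation is triggered by a sequence `⟨i_1, …, i_k⟩` of `k ≥ 2` instructions from
some initial state, all of whose proper prefix steps execute according to the
specification while the last step violates it. Here the sequence is `l ++ [i]`
with `k = l.length + 1`. -/
theorem stmt15 {V L NS Op : Type*} (f : Op → V → V → V)
    (δ : PState V L NS → Instr L Op → PState V L NS) (σ0 : NS)
    (hSI : ∀ (i : Instr L Op) (s0 : PState V L NS), s0.2 = σ0 → AbsSpec f s0 i (δ s0 i))
    (hnc : ¬ CorrectP f δ σ0) :
    ∃ (s0 : PState V L NS) (l : List (Instr L Op)) (i : Instr L Op),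
      s0.2 = σ0 ∧ 1 ≤ l.length ∧
      (∀ (j : ℕ) (h : j < l.length),
        AbsSpec f (runP δ s0 (l.take j)) (l.get ⟨j, h⟩) (runP δ s0 (l.take (j + 1)))) ∧
      ¬ AbsSpec f (runP δ s0 l) i (δ (runP δ s0 l) i) := by
  simp only [CorrectP, not_forall] at hnc
  obtain ⟨i, _, ⟨s0, t, h0, rfl⟩, hv⟩ := hnc
  -- Strong induction on the length of the triggering prefix `t`: if some step inside `t`
  -- already violates the specification, a strictly shorter prefix triggers a violation.
  induction hn : t.length using Nat.strong_induction_on generalizing t i with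
  | _ n ih =>
    by_cases hgood : ∀ (j : ℕ) (h : j < t.length),
        AbsSpec f (runP δ s0 (t.take j)) (t.get ⟨j, h⟩) (runP δ s0 (t.take (j + 1)))
    · refine ⟨s0, t, i, h0, ?_, hgood, hv⟩
      -- An empty prefix would make `i` violate the specification in the initial state `s0`.
      rcases t with _ | ⟨a, t⟩
      · exact absurd (hSI i s0 h0) hv
      · simp
    · push Not at hgood
      obtain ⟨j, hj, hbad⟩ := hgood
      have hstep : runP δ s0 (t.take (j + 1)) = δ (runP δ s0 (t.take j)) (t.get ⟨j, hj⟩) := by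
        rw [runP, List.take_add_one, List.getElem?_eq_getElem hj, List.foldl_append]
        rfl
      rw [hstep] at hbad
      exact ih j (hn ▸ hj) (t.get ⟨j, hj⟩) (t.take j) hbad (by simp; omega)
end
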